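/- Let 𝔞 and 𝔟 be fractional ideals of F and let z = x + y j_F ∈ D_F with x ∈ F_ℝ and y ∈ F_ℝ^×. Then Λ := 𝔞z + 𝔟 = {αz + β : α ∈ 𝔞, β ∈ 𝔟} is a non-degenerate O_F-lattice in D_F (non-degenerate meaning no nonzero λ ∈ Λ has ‖λ‖ = 0), and V(Λ) = d_F · N(𝔞) · N(𝔟) · |N(y)|. -/

import Mathlib

/-!
Write `z = x + y j_F`. The map `E : F_ℝ × F_ℝ → D_F`, `(w, u) ↦ w z + u = (w x + u) + (w y) j_F`, is
an `ℝ`-linear isomorphism because `y` is invertible (`latEquiv`), and it carries `𝔞 × 𝔟` onto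
`Λ = 𝔞 z + 𝔟`. Hence the images under `E` of `ℤ`-bases of `𝔞` and `𝔟`, which are `ℝ`-bases of `F_ℝ`,
form an `ℝ`-basis of `D_F` whose `ℤ`-span is `Λ` (`latBasis`, `latAB_eq_span`). So `Λ` is discrete and
cocompact, and the parallelepiped of this basis is a fundamental domain.

For the volume, `E` is at each place a shear `(w, u) ↦ (w y, w x + u)` followed by the identification
`F_v ⊕ F_v j_v = D_v`. With the chosen normalisations the latter preserves measures, and the shear
scales them by `|y_v|^{n_v}`, so `E` scales volumes by `|N(y)|` (`mp_latEquiv`). The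
parallelepiped pulls back along `E` to the product of the fundamental domains of `𝔞` and `𝔟` in
`F_ℝ`, of volumes `N(𝔞) √d_F` and `N(𝔟) √d_F` (`measR_fundamentalDomain`). The value does not depend on
the fundamental domain, by translation invariance of the measure on `D_F`.

Non-degeneracy (`nondeg`): if `‖α z + β‖ = 0` then `(α_v x_v + β_v) + α_v y_v j_v = 0` at some place
`v`, so `α_v = β_v = 0` because `y_v ≠ 0`, and `α = β = 0` because `F → F_v` is injective.
-/

noncomputable section
open NumberField MeasureTheory
open scoped nonZeroDivisors

set_option linter.unusedSectionVars false
set_option linter.unnecessarySeqFocus false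

namespace Hecke

instance : MeasurableSpace (Quaternion ℝ) := borel _
instance : BorelSpace (Quaternion ℝ) := ⟨rfl⟩

/-- The Haar (Lebesgue) measure on Hamilton's quaternions `ℍ ≅ ℝ⁴`. -/
def volH : Measure (Quaternion ℝ) :=
  Measure.map (Quaternion.linearIsometryEquivTuple.symm) volume

instance : SigmaFinite volH := by
  unfold volH
  exact (Quaternion.linearIsometryEquivTuple.symm.toHomeomorph.toMeasurableEquiv).sigmaFinite_map

noncomputable instance (F : Type) [Field F] [NumberField F] :
    Fintype {v : InfinitePlace F // v.IsReal} := by classical exact Subtype.fintype _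

noncomputable instance (F : Type) [Field F] [NumberField F] :
    Fintype {v : InfinitePlace F // v.IsComplex} := by classical exact Subtype.fintype _

variable (F : Type) [Field F] [NumberField F]

/-- `F_ℝ = F ⊗_ℚ ℝ = ∏_v F_v`. -/
abbrev RS := ({v : InfinitePlace F // v.IsReal} → ℝ) × ({v : InfinitePlace F // v.IsComplex} → ℂ)

/-- `D_F = ∏_v D_v` where `D_v = ℂ` for real `v` and `D_v = ℍ` for complex `v`. -/
abbrev DS := ({v : InfinitePlace F // v.IsReal} → ℂ) ×
  ({v : InfinitePlace F // v.IsComplex} → Quaternion ℝ)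

/-- The Haar measure on `F_ℝ`: Lebesgue at real places, twice Lebesgue at complex places. -/
def measR : Measure (RS F) :=
  (Measure.pi fun _ => (volume : Measure ℝ)).prod (Measure.pi fun _ => (2 : ENNReal) • (volume : Measure ℂ))

/-- The Haar measure on `D_F`: Lebesgue at real places, 4 times Lebesgue at complex places. -/
def measD : Measure (DS F) :=
  (Measure.pi fun _ => (volume : Measure ℂ)).prod (Measure.pi fun _ => (4 : ENNReal) • volH)

/-- `‖z‖ = ∏_{v real} |z_v| ∏_{v complex} |z_v|²` on `D_F`. -/
def normD (z : DS F) : ℝ := (∏ v, ‖z.1 v‖) * ∏ v, ‖z.2 v‖ ^ 2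

/-- `|N(x)| = ∏_{v real} |x_v| ∏_{v complex} |x_v|²` on `F_ℝ`. -/
def normR (x : RS F) : ℝ := (∏ v, |x.1 v|) * ∏ v, ‖x.2 v‖ ^ 2


/-- The structure map `F_ℝ → D_F` (componentwise `ℝ ↪ ℂ` resp. `ℂ ↪ ℍ`). -/
def structureMap : RS F →+* DS F :=
  RingHom.prod
    ((Pi.ringHom fun v => Complex.ofRealHom.comp (Pi.evalRingHom (fun _ => ℝ) v)).comp
      (RingHom.fst _ _))
    ((Pi.ringHom fun v => Quaternion.ofComplex.toRingHom.comp (Pi.evalRingHom (fun _ => ℂ) v)).comp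
      (RingHom.snd _ _))

/-- The map `F → D_F`. -/
def FtoD : F →+* DS F := (structureMap F).comp (NumberField.mixedEmbedding F)

/-- The element `j_F = (j_v)_v ∈ D_F`. -/
def jF : DS F := (fun _ => Complex.I, fun _ => ⟨0, 0, 1, 0⟩)

/-- The `x`-coordinate of `z = x + y j_F ∈ D_F` (`x ∈ F_ℝ`). -/
def projX (z : DS F) : RS F :=
  (fun v => (z.1 v).re, fun v => ⟨(z.2 v).re, (z.2 v).imI⟩)

/-- The `y`-coordinate of `z = x + y j_F ∈ D_F` (`y ∈ F_ℝ`). -/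
def projY (z : DS F) : RS F :=
  (fun v => (z.1 v).im, fun v => ⟨(z.2 v).imJ, (z.2 v).imK⟩)

/-- The trace `Tr_{F/ℚ}` extended to `F_ℝ`. -/
def TrR (x : RS F) : ℝ := (∑ v, x.1 v) + ∑ v, 2 * (x.2 v).re


/-- The character `ψ(x + y j_F) = exp(2πi Tr_{F/ℚ}(x))` on `D_F`. -/
def psiD (z : DS F) : ℂ := Complex.exp (2 * Real.pi * Complex.I * TrR F (projX F z))

lemma projX_add (z w : DS F) : projX F (z + w) = projX F z + projX F w := by
  unfold projX
  refine Prod.ext (funext fun v => ?_) (funext fun v => ?_)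
  · simp
  · simp only [Prod.snd_add, Pi.add_apply, Prod.fst_add]
    exact Complex.ext (by simp) (by simp)

lemma TrR_add (x y : RS F) : TrR F (x + y) = TrR F x + TrR F y := by
  unfold TrR
  simp [Finset.sum_add_distrib, mul_add]
  ring

lemma psiD_add (z w : DS F) : psiD F (z + w) = psiD F z * psiD F w := by
  unfold psiD
  rw [projX_add, TrR_add, ← Complex.exp_add]
  push_cast
  ring_nf

lemma psiD_zero : psiD F 0 = 1 := by
  have h0 : projX F (0 : DS F) = 0 := by
    unfold projX
    refine Prod.ext (funext fun v => ?_) (funext fun v => ?_) <;>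
      simp <;> rfl
  unfold psiD
  rw [h0]
  simp [TrR]

/-- The dual lattice `Λ* = {w : ψ(λ w) = 1 for all λ ∈ Λ}`. -/
def dualLat (Λ : AddSubgroup (DS F)) : AddSubgroup (DS F) where
  carrier := {w | ∀ l ∈ Λ, psiD F (l * w) = 1}
  zero_mem' := by
    intro l _
    rw [mul_zero, psiD_zero]
  add_mem' := by
    intro a b ha hb l hl
    rw [mul_add, psiD_add, ha l hl, hb l hl, mul_one]
  neg_mem' := by
    intro a ha l hl
    have := psiD_add F (l * a) (l * -a)
    rw [← mul_add, add_neg_cancel, mul_zero, psiD_zero, ha l hl, one_mul] at this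
    exact this.symm


/-- An `O_F`-lattice in `D_F`: a discrete cocompact `O_F`-submodule. -/
def IsOFLattice (Λ : AddSubgroup (DS F)) : Prop :=
  (∀ c : 𝓞 F, ∀ z ∈ Λ, FtoD F (c : F) * z ∈ Λ) ∧
    DiscreteTopology Λ ∧ CompactSpace (DS F ⧸ Λ)

/-- Non-degeneracy: no nonzero lattice point has `‖λ‖ = 0`. -/
def Nondeg (Λ : AddSubgroup (DS F)) : Prop :=
  ∀ l ∈ Λ, l ≠ 0 → normD F l ≠ 0

/-- `V(Λ) = V`: some fundamental domain of `Λ` in `D_F` has measure `V`. -/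
def HasVol (Λ : AddSubgroup (DS F)) (V : ℝ) : Prop :=
  ∃ s : Set (DS F), IsAddFundamentalDomain Λ s (measD F) ∧ measD F s = ENNReal.ofReal V

/-- `R` is a set of representatives of the nonzero `U_F`-orbits in `Λ`. -/
def IsRepr (Λ : AddSubgroup (DS F)) (R : Set (DS F)) : Prop :=
  (∀ r ∈ R, r ∈ Λ) ∧ (0 : DS F) ∉ R ∧
    ∀ l ∈ Λ, l ≠ 0 → ∃! r, r ∈ R ∧ ∃ ε : (𝓞 F)ˣ, FtoD F ((ε : 𝓞 F) : F) * r = l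

/-- The Eisenstein series `E(Λ, s) = Σ_{λ ∈ Λ/U_F} V(Λ)^s / ‖λ‖^{2s}`, written in terms
of the covolume `V` of `Λ` and a set `R` of representatives of the nonzero `U_F`-orbits. -/
def Eis (V : ℝ) (R : Set (DS F)) (s : ℂ) : ℂ :=
  ∑' r : R, (V : ℂ) ^ s / ((normD F (r : DS F) : ℂ)) ^ (2 * s)

/-- `T_F = F_ℝ^×`. -/
def TF : Set (RS F) := {x | IsUnit x}

/-- The multiplicative Haar measure `d^×t = ∏_v dt_v/|t_v|^{n_v}` on `F_ℝ`. -/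
def measT : Measure (RS F) :=
  (measR F).withDensity fun t => ENNReal.ofReal (1 / normR F t)

/-- `f(z) = ∏_v exp(-n_v π |z_v|²)` on `D_F`. -/
def fD (z : DS F) : ℝ :=
  (∏ v, Real.exp (-(Real.pi) * ‖z.1 v‖ ^ 2)) * ∏ v, Real.exp (-(2 * Real.pi) * ‖z.2 v‖ ^ 2)

/-- `f` restricted to `F_ℝ`. -/
def fR (x : RS F) : ℝ := fD F (structureMap F x)

/-- `Γ_F(s) = ∫_{T_F} f(t) |N(t)|^s d^×t`. -/
def GammaF (s : ℂ) : ℂ :=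
  ∫ t in TF F, (fR F t : ℂ) * (normR F t : ℂ) ^ s ∂(measT F)

/-- The completed Eisenstein series `Ê(Λ, s) = Γ_F(2s) E(Λ, s)`. -/
def Ehat (V : ℝ) (R : Set (DS F)) (s : ℂ) : ℂ := GammaF F (2 * s) * Eis F V R s

/-- `D` is a (strict) fundamental domain for the multiplicative action of `U_F` on `T_F`. -/
def IsUnitsFD (D : Set (RS F)) : Prop :=
  D ⊆ TF F ∧ ∀ t ∈ TF F, ∃! ε : (𝓞 F)ˣ,
    NumberField.mixedEmbedding F (((ε : 𝓞 F) : F)) * t ∈ D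

/-- `d_F`, the absolute value of the discriminant. -/
def dF : ℕ := (NumberField.discr F).natAbs

/-- `R` is a set of representatives of the nonzero `U_F`-orbits in the fractional ideal `𝔞`. -/
def IsIdealRepr (a : FractionalIdeal (𝓞 F)⁰ F) (R : Set F) : Prop :=
  (∀ r ∈ R, r ∈ a) ∧ (0 : F) ∉ R ∧
    ∀ α ∈ a, α ≠ 0 → ∃! r, r ∈ R ∧ ∃ ε : (𝓞 F)ˣ, ((ε : 𝓞 F) : F) * r = α

/-- The completed partial zeta function
`ξ_F(s, 𝔞) = d_F^{s/2} Γ_F(s) N(𝔞)^s Σ_{α ∈ 𝔞/U_F} |N(α)|^{-s}`, written in terms of a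
set `R` of representatives of the nonzero `U_F`-orbits in `𝔞`. -/
def xiF (s : ℂ) (a : FractionalIdeal (𝓞 F)⁰ F) (R : Set F) : ℂ :=
  (dF F : ℂ) ^ (s / 2) * GammaF F s * (FractionalIdeal.absNorm a : ℂ) ^ s *
    ∑' r : R, ((|Algebra.norm ℚ (r : F)| : ℚ) : ℂ) ^ (-s)

/-- The constant `C_F = 2^{r₁} (2π)^{r₂} R_F / w_F`. -/
def CF : ℝ :=
  2 ^ (Fintype.card {v : InfinitePlace F // v.IsReal}) *
    (2 * Real.pi) ^ (Fintype.card {v : InfinitePlace F // v.IsComplex}) *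
    NumberField.Units.regulator F / (NumberField.Units.torsionOrder F : ℕ)

/-- The dual ideal `𝔟* = {x ∈ F : Tr_{F/ℚ}(βx) ∈ ℤ for all β ∈ 𝔟}`. -/
def dualIdealSet (b : FractionalIdeal (𝓞 F)⁰ F) : Set F :=
  {x | ∀ β ∈ b, ∃ n : ℤ, Algebra.trace ℚ F (β * x) = n}

/-- `B_F(a, b, s) = ∫_{T_F} f(ta) f(t⁻¹ b) |N(t)|^{2s} d^×t`. -/
def BF (a b : RS F) (s : ℂ) : ℂ :=
  ∫ t in TF F, ((fR F (t * a) * fR F (Ring.inverse t * b) : ℝ) : ℂ) *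
    (normR F t : ℂ) ^ (2 * s) ∂(measT F)

/-- The lattice `Λ = 𝔞 z + 𝔟`. -/
def latAB (a b : FractionalIdeal (𝓞 F)⁰ F) (z : DS F) : AddSubgroup (DS F) where
  carrier := {w | ∃ α ∈ a, ∃ β ∈ b, w = FtoD F α * z + FtoD F β}
  zero_mem' := ⟨0, Submodule.zero_mem _, 0, Submodule.zero_mem _, by simp⟩
  add_mem' := by
    rintro w₁ w₂ ⟨α₁, hα₁, β₁, hβ₁, rfl⟩ ⟨α₂, hα₂, β₂, hβ₂, rfl⟩
    exact ⟨α₁ + α₂, Submodule.add_mem _ hα₁ hα₂, β₁ + β₂, Submodule.add_mem _ hβ₁ hβ₂, by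
      rw [map_add, map_add, add_mul]; abel⟩
  neg_mem' := by
    rintro w ⟨α, hα, β, hβ, rfl⟩
    exact ⟨-α, Submodule.neg_mem _ hα, -β, Submodule.neg_mem _ hβ, by rw [map_neg, map_neg, neg_mul]; abel⟩

/-- `P` is a set of representatives of pairs `(α, β*) ∈ (𝔞∖{0}) × (𝔟*∖{0})` modulo
`(α, β*) ∼ (αε, β*ε⁻¹)`, `ε ∈ U_F`. -/
def IsPairRepr (a b : FractionalIdeal (𝓞 F)⁰ F) (P : Set (F × F)) : Prop :=
  (∀ p ∈ P, p.1 ∈ a ∧ p.1 ≠ 0 ∧ p.2 ∈ dualIdealSet F b ∧ p.2 ≠ 0) ∧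
    ∀ α, α ∈ a → α ≠ 0 → ∀ β, β ∈ dualIdealSet F b → β ≠ 0 →
      ∃! p, p ∈ P ∧ ∃ ε : (𝓞 F)ˣ,
        α = p.1 * ((ε : 𝓞 F) : F) ∧ β = p.2 * (((ε⁻¹ : (𝓞 F)ˣ) : 𝓞 F) : F)

/-- The function `h_F(z, 𝔞, 𝔟)`, defined through
`(C_F/2) h_F = (N𝔞/N𝔟)|N(y)| ξ_F(2,𝔟) + V(𝔞)|N(y)| Σ e^{2πi Tr(xαβ*)} B_F(αy, β*, 1/2)`;
`Rb` is a set of representatives for `ξ_F(·, 𝔟)` and `P` one for the pair sum. -/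
def hF (z : DS F) (a b : FractionalIdeal (𝓞 F)⁰ F) (Rb : Set F) (P : Set (F × F)) : ℂ :=
  (2 / CF F) *
    (((FractionalIdeal.absNorm a / FractionalIdeal.absNorm b : ℚ) : ℂ) *
        (normR F (projY F z) : ℂ) * xiF F 2 b Rb +
      ((Real.sqrt (dF F) * (FractionalIdeal.absNorm a : ℚ) * normR F (projY F z) : ℝ) : ℂ) *
        ∑' p : P,
          Complex.exp (2 * Real.pi * Complex.I *
            (TrR F (projX F z * NumberField.mixedEmbedding F (p : F × F).1 *
              NumberField.mixedEmbedding F (p : F × F).2))) *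
          BF F (projY F z * NumberField.mixedEmbedding F (p : F × F).1)
            (NumberField.mixedEmbedding F (p : F × F).2) (1 / 2))


section Quadratic

variable (K : Type) [Field K] [NumberField K] [Algebra F K]

/-- `U_{K/F} = T_{K/F} ∩ U_K`: the units `δ` of `K` with `N_{K/F}(δ) = δ · δ' = 1`,
where `x ↦ x'` is the nontrivial `F`-automorphism `τ` of `K`. -/
def UKF (τ : K ≃ₐ[F] K) : Subgroup (𝓞 K)ˣ where
  carrier := {δ | ((δ : 𝓞 K) : K) * τ ((δ : 𝓞 K) : K) = 1}
  one_mem' := by simp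
  mul_mem' := by
    intro a b ha hb
    have ha' : ((a : 𝓞 K) : K) * τ ((a : 𝓞 K) : K) = 1 := ha
    have hb' : ((b : 𝓞 K) : K) * τ ((b : 𝓞 K) : K) = 1 := hb
    show (((a * b : (𝓞 K)ˣ) : 𝓞 K) : K) * τ (((a * b : (𝓞 K)ˣ) : 𝓞 K) : K) = 1
    have hab : (((a * b : (𝓞 K)ˣ) : 𝓞 K) : K) = ((a : 𝓞 K) : K) * ((b : 𝓞 K) : K) := by
      push_cast; ring
    rw [hab, map_mul]
    linear_combination (((b : 𝓞 K) : K) * τ ((b : 𝓞 K) : K)) * ha' + hb'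
  inv_mem' := by
    intro a ha
    have ha : ((a : 𝓞 K) : K) * τ ((a : 𝓞 K) : K) = 1 := ha
    show (((a⁻¹ : (𝓞 K)ˣ) : 𝓞 K) : K) * τ (((a⁻¹ : (𝓞 K)ˣ) : 𝓞 K) : K) = 1
    have h1 : ((a : 𝓞 K) : K) * (((a⁻¹ : (𝓞 K)ˣ) : 𝓞 K) : K) = 1 := by
      rw [← map_mul, ← Units.val_mul, mul_inv_cancel, Units.val_one, map_one]
    have h2 : τ ((a : 𝓞 K) : K) * τ (((a⁻¹ : (𝓞 K)ˣ) : 𝓞 K) : K) = 1 := by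
      rw [← map_mul, h1, map_one]
    calc (((a⁻¹ : (𝓞 K)ˣ) : 𝓞 K) : K) * τ (((a⁻¹ : (𝓞 K)ˣ) : 𝓞 K) : K)
        = ((((a : 𝓞 K) : K)) * τ ((a : 𝓞 K) : K)) *
            ((((a⁻¹ : (𝓞 K)ˣ) : 𝓞 K) : K) * τ (((a⁻¹ : (𝓞 K)ˣ) : 𝓞 K) : K)) := by
          rw [ha, one_mul]
      _ = (((a : 𝓞 K) : K) * (((a⁻¹ : (𝓞 K)ˣ) : 𝓞 K) : K)) *
            (τ ((a : 𝓞 K) : K) * τ (((a⁻¹ : (𝓞 K)ˣ) : 𝓞 K) : K)) := by ring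
      _ = 1 := by rw [h1, h2, mul_one]

/-- `w_{K/F} = [U_K : U_F U_{K/F}]`. -/
def wKF (τ : K ≃ₐ[F] K) : ℕ :=
  ((Units.map (algebraMap (𝓞 F) (𝓞 K)).toMonoidHom).range ⊔ UKF F K τ).index

/-- `T_{K/F} = {u ∈ T_K : u σ(u) = 1}`, where `σ` is the extension to `K_ℝ`
of the nontrivial `F`-automorphism of `K`. -/
def TKF (σ : RS K →+* RS K) : Set (RS K) := {u | IsUnit u ∧ u * σ u = 1}

/-- The `O_K`-lattice `u𝔄 ⊆ K_ℝ` for `u ∈ K_ℝ` and a fractional ideal `𝔄` of `K`. -/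
def latIdeal (A : FractionalIdeal (𝓞 K)⁰ K) (u : RS K) : AddSubgroup (RS K) where
  carrier := {w | ∃ α ∈ A, w = u * NumberField.mixedEmbedding K α}
  zero_mem' := ⟨0, Submodule.zero_mem _, by simp⟩
  add_mem' := by
    rintro w₁ w₂ ⟨α₁, hα₁, rfl⟩ ⟨α₂, hα₂, rfl⟩
    exact ⟨α₁ + α₂, Submodule.add_mem _ hα₁ hα₂, by rw [map_add, mul_add]⟩
  neg_mem' := by
    rintro w ⟨α, hα, rfl⟩
    exact ⟨-α, Submodule.neg_mem _ hα, by rw [map_neg, mul_neg]⟩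

/-- The lattice `ρ(u𝔄) ⊆ D_F`. -/
def rhoLat (ρ : RS K ≃+ DS F) (A : FractionalIdeal (𝓞 K)⁰ K) (u : RS K) :
    AddSubgroup (DS F) :=
  (latIdeal K A u).map ρ.toAddMonoidHom


/-- The canonical map `ι : F_ℝ → K_ℝ`: the continuous ring homomorphism compatible with the
embeddings of `F` and `K`. -/
def IsIota (ι : RS F →+* RS K) : Prop :=
  Continuous ι ∧ ∀ x : F,
    ι (NumberField.mixedEmbedding F x) = NumberField.mixedEmbedding K (algebraMap F K x)

/-- `σ : K_ℝ → K_ℝ` is the continuous extension of the nontrivial `F`-automorphism `τ` of `K`. -/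
def IsSigma (τ : K ≃ₐ[F] K) (σ : RS K →+* RS K) : Prop :=
  Continuous σ ∧ ∀ x : K,
    σ (NumberField.mixedEmbedding K x) = NumberField.mixedEmbedding K (τ x)

/-- `ρ : K_ℝ → D_F` is an isomorphism of `F_ℝ`-modules preserving the Haar measures and
satisfying `g = f ∘ ρ`. -/
def IsRho (ι : RS F →+* RS K) (ρ : RS K ≃+ DS F) : Prop :=
  (∀ (x : RS F) (w : RS K), ρ (ι x * w) = structureMap F x * ρ w) ∧
    MeasureTheory.MeasurePreserving ρ (measR K) (measD F) ∧
    ∀ w : RS K, fR K w = fD F (ρ w)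

/-- `S` is a set of norm-one representatives for `T_K/T_F` and `ν` is (supported on `S`)
the quotient Haar measure, characterized by the Fubini-type property
`∫_{T_K} φ = ∫_{T_K/T_F} ∫_{T_F} φ(t·ũ) dt du`. -/
def IsQuotMeasureK (ι : RS F →+* RS K) (ν : Measure (RS K)) (S : Set (RS K)) : Prop :=
  (∀ u ∈ S, u ∈ TF K ∧ normR K u = 1) ∧
    ∀ φ : RS K → ENNReal, Measurable φ →
      ∫⁻ t in TF K, φ t ∂(measT K) =
        ∫⁻ u in S, ∫⁻ t in TF F, φ (ι t * u) ∂(measT F) ∂ν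

/-- `S₀ ⊆ S` is a fundamental domain for the action of (the image of) `U_K` on `T_K/T_F`,
the latter quotient being represented by the set `S`. -/
def IsFundDomK (ι : RS F →+* RS K) (S S₀ : Set (RS K)) : Prop :=
  S₀ ⊆ S ∧ ∀ u ∈ S, ∃! u₀, u₀ ∈ S₀ ∧ ∃ (ε : (𝓞 K)ˣ) (t : RS F), IsUnit t ∧
    u = ι t * NumberField.mixedEmbedding K ((ε : 𝓞 K) : K) * u₀

/-- `L` is a section `T_{K/F} → T_K`, `u ↦ ũ`, with `ũ/ũ' = u` and `|N_{K/ℚ}(ũ)| = 1`,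
and `ν` is the Haar measure `d^×u` on `T_{K/F}`, characterized by the Fubini-type property
`∫_{T_K} φ(t) d^×t = ∫_{T_{K/F}} ∫_{T_F} φ(t·ũ) d^×t d^×u`. -/
def IsQuotMeasureKF (σ : RS K →+* RS K) (ι : RS F →+* RS K) (L : RS K → RS K)
    (ν : Measure (RS K)) : Prop :=
  (∀ u ∈ TKF K σ, L u ∈ TF K ∧ normR K (L u) = 1 ∧ L u = u * σ (L u)) ∧
    ∀ φ : RS K → ENNReal, Measurable φ →
      ∫⁻ t in TF K, φ t ∂(measT K) =
        ∫⁻ u in TKF K σ, ∫⁻ t in TF F, φ (ι t * L u) ∂(measT F) ∂ν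

/-- `S₀` is a fundamental domain for the multiplicative action of `U_{K/F}²` on `T_{K/F}`. -/
def IsFundDomKF (τ : K ≃ₐ[F] K) (σ : RS K →+* RS K) (S₀ : Set (RS K)) : Prop :=
  S₀ ⊆ TKF K σ ∧ ∀ u ∈ TKF K σ, ∃! u₀, u₀ ∈ S₀ ∧ ∃ δ : (𝓞 K)ˣ, δ ∈ UKF F K τ ∧
    u = NumberField.mixedEmbedding K ((((δ ^ 2 : (𝓞 K)ˣ) : 𝓞 K)) : K) * u₀

end Quadratic



/-! ### General facts on scaled, product and coordinatewise measures -/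

instance : SecondCountableTopology (Quaternion ℝ) :=
  Quaternion.linearIsometryEquivTuple.toHomeomorph.secondCountableTopology

/-- Measure-preserving maps stay so when both measures are rescaled by `c`. -/
lemma mp_smul {α β : Type*} [MeasurableSpace α] [MeasurableSpace β] {f : α → β} {μ : Measure α}
    {ν : Measure β} (h : MeasurePreserving f μ ν) (c : ENNReal) :
    MeasurePreserving f (c • μ) (c • ν) :=
  ⟨h.measurable, by rw [Measure.map_smul, h.map_eq]⟩

/-- Mathlib's instance covers scalars in `ℝ≥0`; the measures here are scaled in `ℝ≥0∞`. -/
lemma sf_smul {α : Type*} [MeasurableSpace α] (μ : Measure α) [SigmaFinite μ] (c : ENNReal) (hc : c ≠ ⊤) :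
    SigmaFinite (c • μ) := by
  lift c to NNReal using hc
  exact inferInstanceAs (SigmaFinite (c • μ))

lemma pi_smul_measure {ι : Type*} [Fintype ι] {α : ι → Type*} [∀ i, MeasurableSpace (α i)]
    (μ : ∀ i, Measure (α i)) [∀ i, SigmaFinite (μ i)] (c : ι → ENNReal) (hc : ∀ i, c i ≠ ⊤) :
    Measure.pi (fun i => c i • μ i) = (∏ i, c i) • Measure.pi μ := by
  have := fun i => sf_smul (μ i) (c i) (hc i)
  refine Measure.pi_eq fun s _ => ?_
  simp [Finset.prod_mul_distrib]

/-- The rearrangement `((a, b), (c, d)) ↦ ((a, c), (b, d))` preserves product measures. -/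
lemma mp_prodProdProdComm {α β γ δ : Type*} [MeasurableSpace α] [MeasurableSpace β]
    [MeasurableSpace γ] [MeasurableSpace δ] (a : Measure α) (b : Measure β) (c : Measure γ)
    (d : Measure δ) [SigmaFinite a] [SigmaFinite b] [SigmaFinite c] [SigmaFinite d] :
    MeasurePreserving (fun p : (α × β) × (γ × δ) => ((p.1.1, p.2.1), (p.1.2, p.2.2)))
      ((a.prod b).prod (c.prod d)) ((a.prod c).prod (b.prod d)) := by
  have h1 := measurePreserving_prodAssoc a b (c.prod d)
  have h2 : MeasurePreserving (fun p : β × (γ × δ) => (p.2.1, (p.1, p.2.2)))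
      (b.prod (c.prod d)) (c.prod (b.prod d)) :=
    (measurePreserving_prodAssoc c b d).comp
      (((Measure.measurePreserving_swap (μ := b) (ν := c)).prod (MeasurePreserving.id d)).comp
        (measurePreserving_prodAssoc b c d).symm)
  have h3 := (measurePreserving_prodAssoc a c (b.prod d)).symm
  exact h3.comp (((MeasurePreserving.id a).prod h2).comp h1)


/-! ### The local computations at real and complex places -/

/-- Multiplication by `y` on `ℝ` scales Lebesgue measure by `|y|`. -/
lemma mp_realMul {y : ℝ} (hy : y ≠ 0) :
    MeasurePreserving (fun w : ℝ => w * y) (ENNReal.ofReal |y| • volume) volume := by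
  refine ⟨by fun_prop, ?_⟩
  rw [Measure.map_smul, Real.map_volume_mul_right hy, smul_smul, ← ENNReal.ofReal_mul (abs_nonneg _),
    ← abs_mul, mul_inv_cancel₀ hy]
  simp

/-- Multiplication by `y` on `ℂ` scales Lebesgue measure by `|y|²`, the determinant of this
`ℝ`-linear map being the norm of `y` from `ℂ` to `ℝ`. -/
lemma mp_complexMul {y : ℂ} (hy : y ≠ 0) :
    MeasurePreserving (fun w : ℂ => w * y) (ENNReal.ofReal (‖y‖ ^ 2) • volume) volume := by
  refine ⟨by fun_prop, ?_⟩
  have hdet : LinearMap.det (LinearMap.mul ℝ ℂ y) = ‖y‖ ^ 2 := by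
    rw [← Complex.normSq_eq_norm_sq, ← Algebra.norm_complex_apply, Algebra.norm_apply]
    rfl
  have h := Measure.map_linearMap_addHaar_eq_smul_addHaar (volume : Measure ℂ)
    (f := LinearMap.mul ℝ ℂ y) (by rw [hdet]; positivity)
  have hf : (fun w : ℂ => w * y) = LinearMap.mul ℝ ℂ y := by ext w <;> simp [mul_comm]
  rw [Measure.map_smul, hf, h, smul_smul, hdet, ← ENNReal.ofReal_mul (by positivity),
    abs_of_nonneg (by positivity), mul_inv_cancel₀ (by positivity)]
  simp

/-- The shear `(w, u) ↦ (w y, w x + u)` scales the measure exactly as `w ↦ w y` does, since `u` only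
undergoes a translation for fixed `w`. This is the local form of `𝔞 × 𝔟 → 𝔞 (x + y j) + 𝔟`. -/
lemma mp_shear {A : Type*} [Ring A] [MeasurableSpace A] [MeasurableAdd₂ A] [MeasurableMul A]
    (μ ν : Measure A) [SigmaFinite μ] [SigmaFinite ν] [ν.IsAddLeftInvariant] (x y : A) (c : ENNReal) (hc : c ≠ ⊤)
    (h : MeasurePreserving (fun w : A => w * y) (c • μ) μ) :
    MeasurePreserving (fun p : A × A => (p.1 * y, p.1 * x + p.2)) ((c • μ).prod ν) (μ.prod ν) := by
  have := sf_smul μ c hc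
  refine h.skew_product (g := fun w u => w * x + u) ?_ (ae_of_all _ fun w => map_add_left_eq_self ν _)
  exact ((measurable_mul_const x).comp measurable_fst).add measurable_snd

/-- `(w, u) ↦ u + w i` identifies `ℝ × ℝ` with `D_v = ℂ` at a real place. -/
lemma mp_joinReal : MeasurePreserving (fun p : ℝ × ℝ => (⟨p.2, p.1⟩ : ℂ))
    (volume.prod volume) volume :=
  (Complex.volume_preserving_equiv_real_prod.symm).comp
    (Measure.measurePreserving_swap (μ := (volume : Measure ℝ)) (ν := (volume : Measure ℝ)))

/-- The identification `(w, u) ↦ u + w j` of `ℂ × ℂ` with `ℍ`: as `(a + b i) j = a j + b k`, the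
coordinates of `w` are the `j`- and `k`-coordinates. -/
def joinH (p : ℂ × ℂ) : Quaternion ℝ := ⟨p.2.re, p.2.im, p.1.re, p.1.im⟩

/-- `volH` is transported from Euclidean `ℝ⁴`, so `joinH` is factored through
`ℂ × ℂ ≅ ℝ² × ℝ² ≅ ℝ⁴`. -/
lemma mp_joinComplex : MeasurePreserving joinH
    (volume.prod volume) volH := by
  have h1 : MeasurePreserving (fun p : ℂ × ℂ => p.swap) (volume.prod volume) (volume.prod volume) :=
    Measure.measurePreserving_swap
  have h2 := Complex.volume_preserving_equiv_pi.prod Complex.volume_preserving_equiv_pi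
  have h3 := volume_measurePreserving_sumPiEquivProdPi_symm (fun _ : Fin 2 ⊕ Fin 2 => ℝ)
  have h4 := volume_measurePreserving_piCongrLeft (fun _ : Fin 4 => ℝ) (finSumFinEquiv (m := 2) (n := 2))
  have h5 := PiLp.volume_preserving_toLp (Fin 4)
  have h6 : MeasurePreserving (Quaternion.linearIsometryEquivTuple.symm) volume volH :=
    ⟨Quaternion.linearIsometryEquivTuple.symm.continuous.measurable, rfl⟩
  have := h6.comp (h5.comp (h4.comp (h3.comp (h2.comp h1))))
  convert this using 1
  funext p
  have e0 : (0 : Fin 4) = finSumFinEquiv (m := 2) (n := 2) (Sum.inl 0) := rfl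
  have e1 : (1 : Fin 4) = finSumFinEquiv (m := 2) (n := 2) (Sum.inl 1) := rfl
  have e2 : (2 : Fin 4) = finSumFinEquiv (m := 2) (n := 2) (Sum.inr 0) := rfl
  have e3 : (3 : Fin 4) = finSumFinEquiv (m := 2) (n := 2) (Sum.inr 1) := rfl
  ext <;> simp [joinH, MeasurableEquiv.coe_piCongrLeft, -finSumFinEquiv_apply_left, -finSumFinEquiv_apply_right]
  · rw [e0, Equiv.piCongrLeft_apply_apply]; rfl
  · rw [e1, Equiv.piCongrLeft_apply_apply]; rfl
  · rw [e2, Equiv.piCongrLeft_apply_apply]; rfl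
  · rw [e3, Equiv.piCongrLeft_apply_apply]; rfl

/-! ### Coordinates on `D_F = F_ℝ ⊕ F_ℝ j_F` -/

variable {F}

lemma structureMap_fst (u : RS F) (v) : (structureMap F u).1 v = (u.1 v : ℂ) := rfl

lemma structureMap_snd (u : RS F) (v) :
    (structureMap F u).2 v = Quaternion.coeComplex (u.2 v) := rfl

lemma jF_fst (v) : (jF F).1 v = Complex.I := rfl

lemma decomp_fst (u w : RS F) (v) :
    (structureMap F u + structureMap F w * jF F).1 v = ⟨u.1 v, w.1 v⟩ := by
  apply Complex.ext <;> simp [structureMap_fst, jF_fst]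

lemma decomp_snd (u w : RS F) (v) :
    (structureMap F u + structureMap F w * jF F).2 v = joinH (w.2 v, u.2 v) := by
  have h0 : ((jF F).2 v).re = 0 := rfl
  have h1 : ((jF F).2 v).imI = 0 := rfl
  have h2 : ((jF F).2 v).imJ = 1 := rfl
  have h3 : ((jF F).2 v).imK = 0 := rfl
  ext <;> simp [structureMap_snd, joinH, h0, h1, h2, h3]

lemma projX_spec (u w : RS F) : projX F (structureMap F u + structureMap F w * jF F) = u := by
  refine Prod.ext (funext fun v => ?_) (funext fun v => ?_)
  · simp only [projX, decomp_fst]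
  · simp only [projX, decomp_snd]; rfl

lemma projY_spec (u w : RS F) : projY F (structureMap F u + structureMap F w * jF F) = w := by
  refine Prod.ext (funext fun v => ?_) (funext fun v => ?_)
  · simp only [projY, decomp_fst]
  · simp only [projY, decomp_snd]; rfl

lemma proj_decomp (d : DS F) :
    structureMap F (projX F d) + structureMap F (projY F d) * jF F = d := by
  refine Prod.ext (funext fun v => ?_) (funext fun v => ?_)
  · rw [decomp_fst]; rfl
  · rw [decomp_snd]; rfl

lemma structureMap_smul (r : ℝ) (u : RS F) : structureMap F (r • u) = r • structureMap F u := by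
  refine Prod.ext (funext fun v => ?_) (funext fun v => ?_)
  · simp [structureMap_fst]
  · ext <;> simp [structureMap_snd]

/-- For `z = x + y j_F` with `y` invertible, the `ℝ`-linear isomorphism
`F_ℝ × F_ℝ → D_F`, `(w, u) ↦ w z + u = (w x + u) + (w y) j_F`, which carries `𝔞 × 𝔟` to `𝔞 z + 𝔟`. -/
def latEquiv (x : RS F) (y : (RS F)ˣ) : (RS F × RS F) ≃ₗ[ℝ] DS F where
  toFun p := structureMap F (p.1 * x + p.2) + structureMap F (p.1 * y) * jF F
  map_add' p q := by
    simp only [Prod.fst_add, Prod.snd_add, add_mul, map_add]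
    abel
  map_smul' r p := by
    simp only [Prod.smul_fst, Prod.smul_snd, RingHom.id_apply, smul_mul_assoc, ← smul_add,
      structureMap_smul]
  invFun d := (projY F d * ↑y⁻¹, projX F d - projY F d * ↑y⁻¹ * x)
  left_inv p := by
    simp only [projX_spec, projY_spec, Units.mul_inv_cancel_right, add_sub_cancel_left]
  right_inv d := by
    simp only [Units.inv_mul_cancel_right, add_sub_cancel, proj_decomp]

lemma latEquiv_apply (x : RS F) (y : (RS F)ˣ) (p : RS F × RS F) :
    latEquiv x y p = structureMap F (p.1 * x + p.2) + structureMap F (p.1 * y) * jF F := rfl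

lemma unit_ne (y : (RS F)ˣ) : (∀ v, (y : RS F).1 v ≠ 0) ∧ ∀ v, (y : RS F).2 v ≠ 0 := by
  constructor <;> intro v h0
  · have : (y : RS F).1 v * (↑y⁻¹ : RS F).1 v = 1 :=
      congr_fun (congr_arg Prod.fst y.mul_inv) v
    simp [h0] at this
  · have : (y : RS F).2 v * (↑y⁻¹ : RS F).2 v = 1 :=
      congr_fun (congr_arg Prod.snd y.mul_inv) v
    simp [h0] at this

/-! ### The measure of `D_F` in terms of that of `F_ℝ × F_ℝ` -/

instance : SigmaFinite (measR F) := by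
  have : SigmaFinite ((2 : ENNReal) • (volume : Measure ℂ)) := sf_smul _ _ (by simp)
  unfold measR
  infer_instance

/-- The key volume computation: `(w, u) ↦ w z + u` multiplies volumes by `|N(y)|`. After
regrouping coordinates by place it is a product of the local maps `mp_shear`; the factor `4` in the
measure of `ℍ` matches the two factors `2` in the measure of `ℂ × ℂ`. -/
lemma mp_latEquiv (x : RS F) (y : (RS F)ˣ) :
    MeasurePreserving (latEquiv x y) (ENNReal.ofReal (normR F y) • (measR F).prod (measR F))
      (measD F) := by
  obtain ⟨hy1, hy2⟩ := unit_ne y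
  have : SigmaFinite ((2 : ENNReal) • (volume : Measure ℂ)) := sf_smul _ _ (by simp)
  have : SigmaFinite ((4 : ENNReal) • volH) := sf_smul _ _ (by simp)
  have s1 := fun v => sf_smul (volume : Measure ℝ) (ENNReal.ofReal |(y : RS F).1 v|) (by simp)
  have s2 := fun v => sf_smul ((2 : ENNReal) • (volume : Measure ℂ))
    (ENNReal.ofReal (‖(y : RS F).2 v‖ ^ 2)) (by simp)
  have hR := fun v : {v : InfinitePlace F // v.IsReal} =>
    mp_joinReal.comp (mp_shear volume volume (x.1 v) ((y : RS F).1 v) _ (by simp) (mp_realMul (hy1 v)))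
  have j2 : MeasurePreserving joinH (((2 : ENNReal) • (volume : Measure ℂ)).prod
      ((2 : ENNReal) • (volume : Measure ℂ))) ((4 : ENNReal) • volH) := by
    have := mp_smul mp_joinComplex 4
    rwa [Measure.prod_smul_left, Measure.prod_smul_right, smul_smul,
      show (2 : ENNReal) * 2 = 4 by norm_num]
  have hC := fun v : {v : InfinitePlace F // v.IsComplex} =>
    j2.comp (mp_shear ((2 : ENNReal) • (volume : Measure ℂ)) ((2 : ENNReal) • (volume : Measure ℂ))
      (x.2 v) ((y : RS F).2 v) (ENNReal.ofReal (‖(y : RS F).2 v‖ ^ 2)) (by simp) (by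
        have := mp_smul (mp_complexMul (hy2 v)) 2
        rwa [smul_comm] at this))
  have hP := (measurePreserving_pi _ _ hR).prod (measurePreserving_pi _ _ hC)
  have hQ := (measurePreserving_arrowProdEquivProdArrow ℝ ℝ {v : InfinitePlace F // v.IsReal}
    (fun v => ENNReal.ofReal |(y : RS F).1 v| • volume) (fun _ => volume)).symm.prod
    (measurePreserving_arrowProdEquivProdArrow ℂ ℂ {v : InfinitePlace F // v.IsComplex}
    (fun v => ENNReal.ofReal (‖(y : RS F).2 v‖ ^ 2) • (2 : ENNReal) • volume)
    (fun _ => (2 : ENNReal) • volume)).symm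
  have hT := hP.comp (hQ.comp (mp_prodProdProdComm _ _ _ _))
  convert hT using 1
  · funext p
    refine Prod.ext (funext fun v => ?_) (funext fun v => ?_)
    · rw [latEquiv_apply, decomp_fst]; rfl
    · rw [latEquiv_apply, decomp_snd]; rfl
  · rw [pi_smul_measure (fun _ => volume) (fun v => ENNReal.ofReal |(y : RS F).1 v|) (by simp),
      pi_smul_measure (fun _ => (2 : ENNReal) • volume)
        (fun v => ENNReal.ofReal (‖(y : RS F).2 v‖ ^ 2)) (by simp),
      Measure.prod_smul_left, Measure.prod_smul_right, smul_smul, Measure.prod_smul_left,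
      ← ENNReal.ofReal_prod_of_nonneg (fun _ _ => abs_nonneg _),
      ← ENNReal.ofReal_prod_of_nonneg (fun _ _ => by positivity),
      ← ENNReal.ofReal_mul (by positivity)]
    rfl
  · rfl

/-- The factors `2` at complex places, against Mathlib's measure on the mixed space. -/
lemma measR_eq (s : Set (RS F)) :
    measR F s = 2 ^ (InfinitePlace.nrComplexPlaces F) * volume s := by
  rw [measR, pi_smul_measure (fun _ => volume) (fun _ => 2) (by simp), Measure.prod_smul_right,
    Measure.smul_apply, smul_eq_mul, Finset.prod_const, Finset.card_univ]
  congr! 1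


instance : volH.IsAddLeftInvariant :=
  isAddLeftInvariant_map (μ := (volume : Measure (EuclideanSpace ℝ (Fin 4))))
    (AddHom.mk Quaternion.linearIsometryEquivTuple.symm (map_add _))
    Quaternion.linearIsometryEquivTuple.symm.continuous.measurable
    Quaternion.linearIsometryEquivTuple.symm.surjective

instance : (measD F).IsAddLeftInvariant := by
  have : SigmaFinite ((4 : ENNReal) • volH) := sf_smul _ _ (by simp)
  have h1 : (Measure.pi fun _ : {v : InfinitePlace F // v.IsReal} =>
    (volume : Measure ℂ)).IsAddLeftInvariant := inferInstance
  have h2 : (Measure.pi fun _ : {v : InfinitePlace F // v.IsComplex} =>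
    (4 : ENNReal) • volH).IsAddLeftInvariant := inferInstance
  unfold measD
  infer_instance

/-! ### The lattice, its `ℤ`-basis and its covolume -/

/-- Invertible, that is nonzero, fractional ideals, the form Mathlib's lattice bases require. -/
abbrev FIu (F : Type) [Field F] [NumberField F] := (FractionalIdeal (𝓞 F)⁰ F)ˣ

/-- The covolume of `𝔞` in `F_ℝ` is `N(𝔞) √d_F`: Mathlib's covolume has an extra `2^{-r₂}`, which the
factors `2` in `measR` cancel. -/
lemma measR_fundamentalDomain (I : FIu F) :
    measR F (ZSpan.fundamentalDomain (mixedEmbedding.fractionalIdealLatticeBasis F I)) =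
      ENNReal.ofReal ((FractionalIdeal.absNorm I.1 : ℚ) * Real.sqrt (dF F)) := by
  have h := mixedEmbedding.volume_fundamentalDomain_fractionalIdealLatticeBasis F I
  rw [mixedEmbedding.volume_fundamentalDomain_latticeBasis] at h
  have h2 : volume (ZSpan.fundamentalDomain (mixedEmbedding.fractionalIdealLatticeBasis F I)) =
     ENNReal.ofReal (FractionalIdeal.absNorm I.1 : ℚ) *
      ((2 : ENNReal)⁻¹ ^ InfinitePlace.nrComplexPlaces F * NNReal.sqrt ‖discr F‖₊) := by
    convert h using 1
  have h3 : ((NNReal.sqrt ‖discr F‖₊ : NNReal) : ENNReal) = ENNReal.ofReal (Real.sqrt (dF F)) := by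
    rw [← ENNReal.ofReal_coe_nnreal, Real.coe_sqrt, dF, coe_nnnorm, Int.norm_eq_abs,
      Nat.cast_natAbs, Int.cast_abs]
  rw [measR_eq, h2, h3, mul_left_comm, ← mul_assoc (2 ^ _), ← mul_pow,
    ENNReal.mul_inv_cancel (by simp) (by simp), one_pow, one_mul, ENNReal.ofReal_mul]
  exact_mod_cast FractionalIdeal.absNorm_nonneg _

/-- The image of bases of `𝔞` and `𝔟` under `(w, u) ↦ w z + u`: an `ℝ`-basis of `D_F` which is a
`ℤ`-basis of `𝔞 z + 𝔟`. -/
def latBasis (A B : FIu F) (x : RS F) (y : (RS F)ˣ) :=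
  ((mixedEmbedding.fractionalIdealLatticeBasis F A).prod
    (mixedEmbedding.fractionalIdealLatticeBasis F B)).map (latEquiv x y)

lemma latEquiv_eq (x : RS F) (y : (RS F)ˣ) (p : RS F × RS F) :
    latEquiv x y p = structureMap F p.1 * (structureMap F x + structureMap F y * jF F) +
      structureMap F p.2 := by
  rw [latEquiv_apply, map_add, map_mul, map_mul]
  noncomm_ring

lemma latAB_eq_span (A B : FIu F) (x : RS F) (y : (RS F)ˣ) :
    latAB F A B (structureMap F x + structureMap F y * jF F) =
      (Submodule.span ℤ (Set.range (latBasis A B x y))).toAddSubgroup := by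
  ext w
  obtain ⟨p, rfl⟩ := (latEquiv x y).surjective w
  have key : latEquiv x y p ∈ Submodule.span ℤ (Set.range (latBasis A B x y)) ↔
      (p.1 ∈ mixedEmbedding F '' A) ∧ (p.2 ∈ mixedEmbedding F '' B) := by
    rw [← mixedEmbedding.mem_span_fractionalIdealLatticeBasis,
      ← mixedEmbedding.mem_span_fractionalIdealLatticeBasis, Module.Basis.mem_span_iff_repr_mem,
      Module.Basis.mem_span_iff_repr_mem, Module.Basis.mem_span_iff_repr_mem]
    simp [latBasis]
  rw [Submodule.mem_toAddSubgroup, key]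
  constructor
  · rintro ⟨α, hα, β, hβ, h⟩
    have : latEquiv x y p = latEquiv x y (mixedEmbedding F α, mixedEmbedding F β) := by
      rw [h, latEquiv_eq]; rfl
    rw [(latEquiv x y).injective this]
    exact ⟨⟨α, hα, rfl⟩, ⟨β, hβ, rfl⟩⟩
  · rintro ⟨⟨α, hα, h1⟩, ⟨β, hβ, h2⟩⟩
    refine ⟨α, hα, β, hβ, ?_⟩
    rw [latEquiv_eq, ← h1, ← h2]; rfl

/-- The fundamental parallelepiped of `𝔞 z + 𝔟` pulls back to the product of those of `𝔞` and `𝔟`. -/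
lemma measD_fundamentalDomain (A B : FIu F) (x : RS F) (y : (RS F)ˣ) :
    measD F (ZSpan.fundamentalDomain (latBasis A B x y)) =
      ENNReal.ofReal ((dF F : ℝ) * ((FractionalIdeal.absNorm A.1 : ℚ) : ℝ) *
        ((FractionalIdeal.absNorm B.1 : ℚ) : ℝ) * normR F y) := by
  have hpre : latEquiv x y ⁻¹' (ZSpan.fundamentalDomain (latBasis A B x y)) =
      ZSpan.fundamentalDomain (mixedEmbedding.fractionalIdealLatticeBasis F A) ×ˢ
      ZSpan.fundamentalDomain (mixedEmbedding.fractionalIdealLatticeBasis F B) := by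
    ext p
    simp [latBasis, ZSpan.mem_fundamentalDomain, -Set.mem_Ico]
  have hA : (0 : ℝ) ≤ (FractionalIdeal.absNorm A.1 : ℚ) :=
    mod_cast FractionalIdeal.absNorm_nonneg _
  have hB : (0 : ℝ) ≤ (FractionalIdeal.absNorm B.1 : ℚ) :=
    mod_cast FractionalIdeal.absNorm_nonneg _
  have hN : 0 ≤ normR F y := by unfold normR; positivity
  rw [← (mp_latEquiv x y).measure_preimage
    (ZSpan.fundamentalDomain_measurableSet _).nullMeasurableSet, hpre, Measure.smul_apply,
    Measure.prod_prod, measR_fundamentalDomain, measR_fundamentalDomain, smul_eq_mul,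
    ← ENNReal.ofReal_mul (by positivity), ← ENNReal.ofReal_mul hN]
  congr 1
  have := Real.mul_self_sqrt (Nat.cast_nonneg (α := ℝ) (dF F))
  linear_combination (normR F y * (FractionalIdeal.absNorm A.1 : ℚ) *
    (FractionalIdeal.absNorm B.1 : ℚ)) * this

/-- A full lattice is cocompact: the closure of a bounded fundamental domain surjects onto the
quotient. -/
lemma compactSpace_quotient_span {E ι : Type*} [NormedAddCommGroup E] [NormedSpace ℝ E]
    [FiniteDimensional ℝ E] [Finite ι] (b : Module.Basis ι ℝ E) :
    CompactSpace (E ⧸ (Submodule.span ℤ (Set.range b)).toAddSubgroup) := by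
  have := Fintype.ofFinite ι
  have := FiniteDimensional.proper_real E
  refine ⟨?_⟩
  have hK := (ZSpan.fundamentalDomain_isBounded b).isCompact_closure.image
    (QuotientAddGroup.continuous_mk (N := (Submodule.span ℤ (Set.range b)).toAddSubgroup))
  convert hK
  refine (Set.eq_univ_of_forall fun q => ?_).symm
  obtain ⟨m, rfl⟩ := QuotientAddGroup.mk_surjective q
  refine ⟨ZSpan.fract b m, subset_closure (ZSpan.fract_mem_fundamentalDomain b m), ?_⟩
  rw [QuotientAddGroup.eq, Submodule.mem_toAddSubgroup, ← ZSpan.fract_eq_fract, ZSpan.fract_fract]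

/-! ### Non-degeneracy -/

lemma mixedEmbedding_fst_eq_zero {α : F} {v} (h : (mixedEmbedding F α).1 v = 0) : α = 0 := by
  simpa using h

lemma mixedEmbedding_snd_eq_zero {α : F} {v} (h : (mixedEmbedding F α).2 v = 0) : α = 0 := by
  simpa using h

/-- If `‖α z + β‖ = 0`, some component of `(α x + β) + (α y) j_F` vanishes, as `‖·‖` is a product of
powers of absolute values. Its `j_v`-coordinate `α_v y_v` forces `α = 0`, and then `β_v = 0` forces `β = 0`. -/
lemma nondeg (a b : FractionalIdeal (𝓞 F)⁰ F) (x : RS F) (y : (RS F)ˣ) :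
    Nondeg F (latAB F a b (structureMap F x + structureMap F y * jF F)) := by
  obtain ⟨hy1, hy2⟩ := unit_ne y
  rintro l ⟨α, -, β, -, rfl⟩ hl hn
  have he : FtoD F α * (structureMap F x + structureMap F y * jF F) + FtoD F β =
      structureMap F (mixedEmbedding F α * x + mixedEmbedding F β) +
        structureMap F (mixedEmbedding F α * y) * jF F := by
    rw [map_add, map_mul, map_mul]
    change structureMap F _ * _ + structureMap F _ = _
    noncomm_ring
  suffices α = 0 ∧ β = 0 by
    obtain ⟨rfl, rfl⟩ := this
    simp at hl
  rw [he, normD, mul_eq_zero, Finset.prod_eq_zero_iff, Finset.prod_eq_zero_iff] at hn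
  obtain ⟨v, -, hv⟩ | ⟨v, -, hv⟩ := hn
  · rw [norm_eq_zero, decomp_fst] at hv
    have h2 := congr_arg Complex.im hv
    have hα : α = 0 := mixedEmbedding_fst_eq_zero ((mul_eq_zero.mp h2).resolve_right (hy1 v))
    have h1 := congr_arg Complex.re hv
    subst hα
    exact ⟨rfl, mixedEmbedding_fst_eq_zero (v := v) (by simpa using h1)⟩
  · rw [pow_eq_zero_iff two_ne_zero, norm_eq_zero, decomp_snd] at hv
    have h2 : (mixedEmbedding F α).2 v * (y : RS F).2 v = 0 :=
      Complex.ext (congr_arg QuaternionAlgebra.imJ hv) (congr_arg QuaternionAlgebra.imK hv)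
    have hα : α = 0 := mixedEmbedding_snd_eq_zero ((mul_eq_zero.mp h2).resolve_right (hy2 v))
    subst hα
    have h1 : (mixedEmbedding F (0 : F) * x + mixedEmbedding F β).2 v = 0 :=
      Complex.ext (congr_arg QuaternionAlgebra.re hv) (congr_arg QuaternionAlgebra.imI hv)
    exact ⟨rfl, mixedEmbedding_snd_eq_zero (v := v) (by simpa using h1)⟩

/-! ### Assembling the result -/

variable (F)

/-- For fractional ideals `𝔞, 𝔟` of `F` and `z = x + y j_F` with
`y ∈ F_ℝ^×`, the set `Λ = 𝔞z + 𝔟` is a non-degenerate `O_F`-lattice in `D_F` and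
`V(Λ) = d_F N(𝔞) N(𝔟) |N(y)|`. -/
theorem statement1 (a b : FractionalIdeal (𝓞 F)⁰ F) (ha : a ≠ 0) (hb : b ≠ 0)
    (x y : RS F) (hy : IsUnit y) (z : DS F)
    (hz : z = structureMap F x + structureMap F y * jF F) :
    IsOFLattice F (latAB F a b z) ∧ Nondeg F (latAB F a b z) ∧
    HasVol F (latAB F a b z)
      ((dF F : ℝ) * ((FractionalIdeal.absNorm a : ℚ) : ℝ) *
        ((FractionalIdeal.absNorm b : ℚ) : ℝ) * normR F y) ∧
    ∀ V : ℝ, 0 ≤ V → HasVol F (latAB F a b z) V →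
      V = (dF F : ℝ) * ((FractionalIdeal.absNorm a : ℚ) : ℝ) *
        ((FractionalIdeal.absNorm b : ℚ) : ℝ) * normR F y := by
  subst hz
  lift y to (RS F)ˣ using hy
  lift a to FIu F using ha.isUnit
  lift b to FIu F using hb.isUnit
  have hfd := ZSpan.isAddFundamentalDomain' (latBasis a b x y) (measD F)
  rw [← latAB_eq_span] at hfd
  have hdisc : DiscreteTopology (Submodule.span ℤ (Set.range (latBasis a b x y))).toAddSubgroup :=
    inferInstance
  have hcpt := compactSpace_quotient_span (latBasis a b x y)
  have hcount : Countable (Submodule.span ℤ (Set.range (latBasis a b x y))).toAddSubgroup :=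
    inferInstanceAs (Countable (Submodule.span ℤ (Set.range (latBasis a b x y))))
  rw [← latAB_eq_span] at hdisc hcpt hcount
  have hvol := measD_fundamentalDomain a b x y
  refine ⟨⟨?_, hdisc, hcpt⟩, nondeg _ _ x y, ⟨_, hfd, hvol⟩, ?_⟩
  · rintro c _ ⟨α, hα, β, hβ, rfl⟩
    refine ⟨(c : F) * α, ?_, (c : F) * β, ?_, by rw [map_mul, map_mul]; noncomm_ring⟩
    · simpa [Algebra.smul_def] using Submodule.smul_mem (a.1 : Submodule (𝓞 F) F) c hα
    · simpa [Algebra.smul_def] using Submodule.smul_mem (b.1 : Submodule (𝓞 F) F) c hβ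
  -- `measD` is translation invariant, so any two fundamental domains have the same measure.
  · rintro V hV ⟨s, hs, hsV⟩
    rw [hs.measure_eq hfd, hvol] at hsV
    refine ((ENNReal.ofReal_eq_ofReal_iff ?_ hV).mp hsV).symm
    have hA : (0 : ℝ) ≤ (FractionalIdeal.absNorm a.1 : ℚ) :=
      mod_cast FractionalIdeal.absNorm_nonneg _
    have hB : (0 : ℝ) ≤ (FractionalIdeal.absNorm b.1 : ℚ) :=
      mod_cast FractionalIdeal.absNorm_nonneg _
    have hN : 0 ≤ normR F y := by unfold normR; positivity
    positivity

end Hecke
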